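/- Let d ≥ 1 and let n_1, n_2, …, n_d ≥ 2 be integers with n_1 ≥ n_i for all i, and set N = n_1 n_2 ⋯ n_d. Let P be the transition matrix of the lazy random walk on the periodic lattice ℤ_{n_1} × ℤ_{n_2} × ⋯ × ℤ_{n_d}, i.e. P = (1/2)·I + (1/(4d))·Σ_{i=1}^{d} (S_i + S_i^{-1}), where S_i is the permutation matrix shifting the i-th coordinate by +1 modulo n_i. Then for every ε with 0 < ε < 1/2 and every integer t ≥ 2·d·n_1²·⌈ln(d/ε)⌉, and for every starting vertex x, the total variation distance satisfies (1/2)·Σ_y |(P^t)(y,x) − 1/N| ≤ ε. -/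

import Mathlib

noncomputable def psiAux (m : ℕ) (k : ZMod m) : ℝ :=
  if k = 0 then 0 else 1 + 4 * (k.val : ℝ) * ((m : ℝ) - k.val) / (m : ℝ) ^ 2

lemma psiAux_zero (m : ℕ) : psiAux m 0 = 0 := by simp [psiAux]

lemma psiAux_bounds (m : ℕ) [NeZero m] (k : ZMod m) :
    0 ≤ psiAux m k ∧ psiAux m k ≤ 2 ∧ (k ≠ 0 → 1 ≤ psiAux m k) := by
  have hm : (0 : ℝ) < m := by exact_mod_cast Nat.pos_of_ne_zero (NeZero.ne m)
  have hv : (k.val : ℝ) ≤ m := by exact_mod_cast (ZMod.val_lt k).le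
  have hv0 : (0 : ℝ) ≤ k.val := by positivity
  have h1 : 0 ≤ 4 * (k.val : ℝ) * ((m : ℝ) - k.val) / (m : ℝ) ^ 2 := by
    have : 0 ≤ (m : ℝ) - k.val := by linarith
    positivity
  have h2 : 4 * (k.val : ℝ) * ((m : ℝ) - k.val) / (m : ℝ) ^ 2 ≤ 1 := by
    rw [div_le_one (by positivity)]
    nlinarith [sq_nonneg ((m : ℝ) - 2 * k.val)]
  unfold psiAux
  split_ifs with h
  · simp [h]
  · exact ⟨by linarith, by linarith, fun _ => by linarith⟩

lemma psiAux_le_of (m : ℕ) [NeZero m] (k : ZMod m) (v : ℕ) (hv : v ≤ m) (hk : k = (v : ZMod m)) :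
    psiAux m k ≤ 1 + 4 * (v : ℝ) * ((m : ℝ) - v) / (m : ℝ) ^ 2 := by
  have hm : (0 : ℝ) < m := by exact_mod_cast Nat.pos_of_ne_zero (NeZero.ne m)
  have hv' : (v : ℝ) ≤ m := by exact_mod_cast hv
  have h1 : 0 ≤ 4 * (v : ℝ) * ((m : ℝ) - v) / (m : ℝ) ^ 2 := by
    have : 0 ≤ (m : ℝ) - v := by linarith
    positivity
  unfold psiAux
  split_ifs with h
  · linarith
  · have : v < m := by
      rcases hv.lt_or_eq with h' | h'
      · exact h'
      · exfalso; apply h; rw [hk, h']; simp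
    rw [hk, ZMod.val_natCast_of_lt this]

lemma psiAux_step (m : ℕ) [NeZero m] (k : ZMod m) (hk : k ≠ 0) :
    (psiAux m (k + 1) + psiAux m (k - 1)) / 2 ≤ psiAux m k - 2 / (m : ℝ) ^ 2 * psiAux m k := by
  have hm : (0 : ℝ) < m := by exact_mod_cast Nat.pos_of_ne_zero (NeZero.ne m)
  have hv0 : k.val ≠ 0 := by rwa [Ne, ZMod.val_eq_zero]
  obtain ⟨w, hw⟩ := Nat.exists_eq_succ_of_ne_zero hv0
  have hlt := ZMod.val_lt k
  have hkw : k = ((w + 1 : ℕ) : ZMod m) := by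
    rw [← Nat.succ_eq_add_one, ← hw, ZMod.natCast_zmod_val]
  have a1 := psiAux_le_of m (k + 1) (w + 2) (by omega) (by rw [hkw]; push_cast; ring)
  have a2 := psiAux_le_of m (k - 1) w (by omega) (by rw [hkw]; push_cast; ring)
  have a3 : psiAux m k = 1 + 4 * ((w : ℝ) + 1) * ((m : ℝ) - (w + 1)) / (m : ℝ) ^ 2 := by
    unfold psiAux
    rw [if_neg hk, hw]; push_cast; rfl
  have a4 : 2 / (m : ℝ) ^ 2 * psiAux m k ≤ 2 / (m : ℝ) ^ 2 * 2 :=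
    mul_le_mul_of_nonneg_left (psiAux_bounds m k).2.1 (by positivity)
  have a5 : (1 + 4 * ((w + 2 : ℕ) : ℝ) * ((m : ℝ) - ((w + 2 : ℕ) : ℝ)) / (m : ℝ) ^ 2
      + (1 + 4 * (w : ℝ) * ((m : ℝ) - w) / (m : ℝ) ^ 2)) / 2
      = (1 + 4 * ((w : ℝ) + 1) * ((m : ℝ) - (w + 1)) / (m : ℝ) ^ 2) - 2 / (m : ℝ) ^ 2 * 2 := by
    push_cast; field_simp; ring
  linarith

section aux
variable {d : ℕ} {n : Fin d → ℕ} [∀ i, NeZero (n i)]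

noncomputable def rhoAux (z : ∀ i, ZMod (n i)) : ℝ := ∑ i, psiAux (n i) (z i)

lemma rhoAux_add_single (z : ∀ i, ZMod (n i)) (i : Fin d) (a : ZMod (n i)) :
    rhoAux (z + Pi.single i a) = rhoAux z - psiAux (n i) (z i) + psiAux (n i) (z i + a) := by
  unfold rhoAux
  rw [← Finset.add_sum_erase _ _ (Finset.mem_univ i), ← Finset.add_sum_erase (a := i) _ (fun j => psiAux (n j) (z j)) (Finset.mem_univ i)]
  have : ∑ j ∈ Finset.univ.erase i, psiAux (n j) ((z + Pi.single i a : ∀ i, ZMod (n i)) j)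
      = ∑ j ∈ Finset.univ.erase i, psiAux (n j) (z j) := by
    apply Finset.sum_congr rfl
    intro j hj
    simp [Pi.single_eq_of_ne (Finset.ne_of_mem_erase hj)]
  rw [this]; simp; ring

noncomputable def qAux (f : (∀ i, ZMod (n i)) → ℝ) (x : ∀ i, ZMod (n i)) : ℝ :=
  1 / 2 * f x + 1 / (4 * (d : ℝ)) * ∑ i, (f (x + Pi.single i 1) + f (x + Pi.single i (-1)))

lemma qAux_contract (hd : 0 < d) (n₁ : ℕ) (hn : ∀ i, n i ≤ n₁)
    (f : (∀ i, ZMod (n i)) → ℝ) (M : ℝ) (hM : 0 ≤ M)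
    (hf : ∀ x y, f x - f y ≤ M * rhoAux (x - y)) (x y : ∀ i, ZMod (n i)) :
    qAux f x - qAux f y ≤ (M * (1 - 2 / (d * (n₁ : ℝ) ^ 2))) * rhoAux (x - y) := by
  have hd' : (0 : ℝ) < d := by exact_mod_cast hd
  have key : ∀ i : Fin d, 2 * (f x - f y) + (f (x + Pi.single i 1) + f (x + Pi.single i (-1)))
      - (f (y + Pi.single i 1) + f (y + Pi.single i (-1)))
      ≤ 4 * M * (rhoAux (x - y) - 2 / (n₁ : ℝ) ^ 2 * psiAux (n i) ((x - y) i)) := by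
    intro i
    by_cases h : (x - y) i = 0
    · rw [h, psiAux_zero]
      have b0 := hf x y
      have b1 := hf (x + Pi.single i 1) (y + Pi.single i 1)
      have b2 := hf (x + Pi.single i (-1)) (y + Pi.single i (-1))
      rw [add_sub_add_right_eq_sub] at b1 b2
      linarith
    · have b1 := hf (x + Pi.single i 1) y
      have b2 := hf (x + Pi.single i (-1)) y
      have b3 := hf x (y + Pi.single i 1)
      have b4 := hf x (y + Pi.single i (-1))
      rw [show x + Pi.single i 1 - y = (x - y) + Pi.single i 1 by abel, rhoAux_add_single] at b1
      rw [show x + Pi.single i (-1) - y = (x - y) + Pi.single i (-1) by abel,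
        rhoAux_add_single] at b2
      rw [show x - (y + Pi.single i 1) = (x - y) + Pi.single i (-1) by
        rw [Pi.single_neg]; abel, rhoAux_add_single] at b3
      rw [show x - (y + Pi.single i (-1)) = (x - y) + Pi.single i 1 by
        rw [Pi.single_neg]; abel, rhoAux_add_single] at b4
      have s := psiAux_step (n i) _ h
      rw [sub_eq_add_neg _ (1 : ZMod (n i))] at s
      have hni : (0 : ℝ) < n i := by exact_mod_cast Nat.pos_of_ne_zero (NeZero.ne (n i))
      have hni' : (n i : ℝ) ≤ n₁ := by exact_mod_cast hn i
      have s2 : 2 / (n₁ : ℝ) ^ 2 * psiAux (n i) ((x - y) i)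
          ≤ 2 / (n i : ℝ) ^ 2 * psiAux (n i) ((x - y) i) := by
        apply mul_le_mul_of_nonneg_right _ (psiAux_bounds _ _).1
        gcongr
      have s3 := mul_le_mul_of_nonneg_left (s.trans (sub_le_sub_left s2 _)) hM
      linarith
  have hs := Finset.sum_le_sum (fun i (_ : i ∈ Finset.univ) => key i)
  have e1 : qAux f x - qAux f y = 1 / (4 * (d : ℝ)) * ∑ i : Fin d, (2 * (f x - f y)
      + (f (x + Pi.single i 1) + f (x + Pi.single i (-1)))
      - (f (y + Pi.single i 1) + f (y + Pi.single i (-1)))) := by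
    unfold qAux
    simp only [Finset.sum_sub_distrib, Finset.sum_add_distrib, Finset.sum_const, Finset.card_univ,
      Fintype.card_fin, nsmul_eq_mul]
    field_simp; ring
  have e2 : ∑ i : Fin d, 4 * M * (rhoAux (x - y) - 2 / (n₁ : ℝ) ^ 2 * psiAux (n i) ((x - y) i))
      = 4 * M * (d * rhoAux (x - y) - 2 / (n₁ : ℝ) ^ 2 * rhoAux (x - y)) := by
    rw [← Finset.mul_sum, Finset.sum_sub_distrib, ← Finset.mul_sum, Finset.sum_const]
    simp [rhoAux]
  rw [e1]
  rw [e2] at hs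
  refine (mul_le_mul_of_nonneg_left hs (by positivity)).trans (le_of_eq ?_)
  have : 2 / (d * (n₁ : ℝ) ^ 2) = 2 / (n₁ : ℝ) ^ 2 / d := by rw [div_div, mul_comm]
  rw [this]
  generalize 2 / (n₁ : ℝ) ^ 2 = c
  field_simp

lemma qAux_sum (hd : 0 < d) (f : (∀ i, ZMod (n i)) → ℝ) : ∑ x, qAux f x = ∑ x, f x := by
  have hd' : (0 : ℝ) < d := by exact_mod_cast hd
  have sh : ∀ a : ∀ i, ZMod (n i), ∑ x, f (x + a) = ∑ x, f x := fun a =>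
    Equiv.sum_comp (Equiv.addRight a) f
  unfold qAux
  rw [Finset.sum_add_distrib, ← Finset.mul_sum, ← Finset.mul_sum, Finset.sum_comm]
  simp only [Finset.sum_add_distrib, sh, Finset.sum_const, Finset.card_univ, Fintype.card_fin,
    nsmul_eq_mul]
  field_simp; ring

end aux

/-- The lazy random walk on the periodic lattice
`ℤ_{n 0} × ⋯ × ℤ_{n (d-1)}` (laziness 1/2, otherwise a uniformly random coordinate is
shifted by ±1) mixes to within total variation `ε` of uniform after
`2 d n₁² ⌈ln(d/ε)⌉` steps, where `n₁ = n ⟨0,hd⟩` is the largest side length. -/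
theorem lazy_random_walk_mixing_on_periodic_lattice
    (d : ℕ) (hd : 0 < d) (n : Fin d → ℕ) [∀ i, NeZero (n i)]
    (hn2 : ∀ i, 2 ≤ n i) (hmax : ∀ i, n i ≤ n ⟨0, hd⟩)
    (P : Matrix (∀ i, ZMod (n i)) (∀ i, ZMod (n i)) ℝ)
    (hP : ∀ x y : ∀ i, ZMod (n i),
      P y x = (if y = x then (1 / 2 : ℝ) else 0)
        + (1 / (4 * (d : ℝ))) * ∑ i : Fin d,
            ((if y = Function.update x i (x i + 1) then (1 : ℝ) else 0)
              + (if y = Function.update x i (x i - 1) then (1 : ℝ) else 0)))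
    (ε : ℝ) (hε0 : 0 < ε) (hε : ε < 1 / 2)
    (t : ℕ)
    (ht : (2 * (d : ℝ) * (n ⟨0, hd⟩ : ℝ) ^ 2) * (⌈Real.log ((d : ℝ) / ε)⌉ : ℝ) ≤ (t : ℝ))
    (x : ∀ i, ZMod (n i)) :
    (1 / 2) * ∑ y : ∀ i, ZMod (n i),
        |(P ^ t) y x - 1 / ((∏ i, n i : ℕ) : ℝ)| ≤ ε := by
  classical
  have hd' : (0 : ℝ) < d := by exact_mod_cast hd
  set n₁ := n ⟨0, hd⟩ with hn₁
  have hn₁' : (2 : ℝ) ≤ n₁ := by exact_mod_cast hn2 ⟨0, hd⟩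
  have hQ : ∀ f : (∀ i, ZMod (n i)) → ℝ, Matrix.vecMul f P = qAux f := by
    intro f
    funext z
    have u1 : ∀ i, Function.update z i (z i + 1) = z + Pi.single i 1 := by
      intro i
      funext j
      by_cases h : j = i
      · subst h; simp
      · simp [h]
    have u2 : ∀ i, Function.update z i (z i - 1) = z + Pi.single i (-1) := by
      intro i
      funext j
      by_cases h : j = i
      · subst h; simp [sub_eq_add_neg]
      · simp [h]
    simp only [Matrix.vecMul, dotProduct, hP, u1, u2, qAux, mul_add, Finset.sum_add_distrib,
      Finset.mul_sum]
    congr 1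
    · simp [mul_comm]
    · congr 1
      · rw [Finset.sum_comm]
        simp [mul_comm]
      · rw [Finset.sum_comm]
        simp [mul_comm]
  set c : ℝ := 1 - 2 / (d * (n₁ : ℝ) ^ 2) with hc
  have hd1 : (1 : ℝ) ≤ d := by exact_mod_cast hd
  have hc0 : 0 ≤ c := by
    rw [hc, sub_nonneg, div_le_one (by positivity)]
    nlinarith
  have main : ∀ f : (∀ i, ZMod (n i)) → ℝ, (∀ x y, f x - f y ≤ 2 * rhoAux (x - y)) → ∀ s : ℕ,
      (∀ x y, Matrix.vecMul f (P ^ s) x - Matrix.vecMul f (P ^ s) y ≤ 2 * c ^ s * rhoAux (x - y))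
      ∧ ∑ x, Matrix.vecMul f (P ^ s) x = ∑ x, f x := by
    intro f hf s
    induction s with
    | zero => simpa using hf
    | succ s ih =>
      rw [pow_succ P s, ← Matrix.vecMul_vecMul, hQ]
      refine ⟨fun x y => ?_, by rw [qAux_sum hd]; exact ih.2⟩
      have := qAux_contract hd n₁ hmax _ (2 * c ^ s) (by positivity) ih.1 x y
      rw [pow_succ, ← mul_assoc]
      exact this
  have hrho2 : ∀ z : ∀ i, ZMod (n i), rhoAux z ≤ 2 * d := by
    intro z
    unfold rhoAux
    refine (Finset.sum_le_sum (fun i _ => (psiAux_bounds (n i) (z i)).2.1)).trans ?_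
    simp [mul_comm]
  have hrho0 : ∀ z : ∀ i, ZMod (n i), 0 ≤ rhoAux z := fun z =>
    Finset.sum_nonneg (fun i _ => (psiAux_bounds (n i) (z i)).1)
  have hrho1 : ∀ z : ∀ i, ZMod (n i), z ≠ 0 → 1 ≤ rhoAux z := by
    intro z hz
    obtain ⟨i, hi⟩ := Function.ne_iff.mp hz
    exact ((psiAux_bounds (n i) (z i)).2.2 hi).trans
      (Finset.single_le_sum (f := fun i => psiAux (n i) (z i))
        (fun i _ => (psiAux_bounds (n i) (z i)).1) (Finset.mem_univ i))
  set N : ℝ := ((∏ i, n i : ℕ) : ℝ) with hN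
  have hcard : (Fintype.card (∀ i, ZMod (n i)) : ℝ) = N := by
    rw [hN, Fintype.card_pi]; simp [ZMod.card]
  have hNpos : 0 < N := by rw [← hcard]; exact_mod_cast Fintype.card_pos
  let f : (∀ i, ZMod (n i)) → ℝ := fun y => if 0 ≤ (P ^ t) y x - 1 / N then 1 else -1
  have hfb : ∀ y, f y ≤ 1 ∧ -1 ≤ f y := by
    intro y
    simp only [f]
    split_ifs <;> norm_num
  have hfL : ∀ x y, f x - f y ≤ 2 * rhoAux (x - y) := by
    intro a b
    by_cases h : a = b
    · subst h
      have := hrho0 (a - a)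
      linarith
    · have := hrho1 (a - b) (sub_ne_zero.mpr h)
      linarith [(hfb a).1, (hfb b).2]
  obtain ⟨m1, m2⟩ := main f hfL t
  have habs : ∑ y, |(P ^ t) y x - 1 / N| = Matrix.vecMul f (P ^ t) x - (∑ y, f y) / N := by
    rw [Matrix.vecMul, dotProduct, Finset.sum_div, ← Finset.sum_sub_distrib]
    apply Finset.sum_congr rfl
    intro y _
    simp only [f]
    split_ifs with h
    · rw [abs_of_nonneg h]; ring
    · rw [abs_of_neg (not_le.mp h)]; ring
  have hbound : Matrix.vecMul f (P ^ t) x - (∑ y, f y) / N ≤ 4 * d * c ^ t := by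
    have h1 : ∑ y, (Matrix.vecMul f (P ^ t) x - Matrix.vecMul f (P ^ t) y)
        ≤ ∑ _y : (∀ i, ZMod (n i)), 4 * d * c ^ t := by
      apply Finset.sum_le_sum
      intro y _
      refine (m1 x y).trans ?_
      have := mul_le_mul_of_nonneg_left (hrho2 (x - y)) (by positivity : 0 ≤ 2 * c ^ t)
      linarith
    rw [Finset.sum_sub_distrib, m2, Finset.sum_const, Finset.sum_const, Finset.card_univ,
      nsmul_eq_mul, nsmul_eq_mul, hcard] at h1
    rw [sub_le_iff_le_add, ← sub_le_iff_le_add', le_div_iff₀ hNpos]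
    linarith
  rw [habs]
  set L : ℤ := ⌈Real.log ((d : ℝ) / ε)⌉ with hL
  have hde : 1 < (d : ℝ) / ε := by rw [lt_div_iff₀ hε0]; linarith
  have hLpos : (1 : ℝ) ≤ L := by
    have : 0 < L := Int.ceil_pos.mpr (Real.log_pos hde)
    exact_mod_cast this
  have hLge : Real.log ((d : ℝ) / ε) ≤ L := Int.le_ceil _
  have hexp : c ^ t ≤ Real.exp (-(L : ℝ) - 1) := by
    have e1 : c ≤ Real.exp (-(2 / (d * (n₁ : ℝ) ^ 2))) := by
      have := Real.add_one_le_exp (-(2 / (d * (n₁ : ℝ) ^ 2)))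
      linarith
    refine (pow_le_pow_left₀ hc0 e1 t).trans ?_
    rw [← Real.exp_nat_mul, Real.exp_le_exp]
    have e2 : 4 * (L : ℝ) ≤ t * (2 / (d * (n₁ : ℝ) ^ 2)) := by
      rw [← mul_div_assoc, le_div_iff₀ (by positivity)]
      linarith
    linarith
  have h3 : Real.exp (-(L : ℝ)) ≤ ε / d := by
    calc Real.exp (-(L : ℝ)) ≤ Real.exp (-Real.log ((d : ℝ) / ε)) :=
          Real.exp_le_exp.mpr (by linarith)
      _ = ε / d := by rw [Real.exp_neg, Real.exp_log (by linarith), inv_div]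
  have h4 : Real.exp (-1) ≤ 1 / 2 := by
    rw [Real.exp_neg, one_div]
    apply inv_anti₀ (by norm_num)
    have := Real.add_one_le_exp 1
    linarith
  have h5 : c ^ t ≤ ε / d * (1 / 2) := by
    refine hexp.trans ?_
    rw [sub_eq_add_neg, Real.exp_add]
    exact mul_le_mul h3 h4 (Real.exp_pos _).le (by positivity)
  have h6 : 4 * d * c ^ t ≤ 2 * ε := by
    have := mul_le_mul_of_nonneg_left h5 (by positivity : (0 : ℝ) ≤ 4 * d)
    refine this.trans (le_of_eq ?_)
    field_simp; ring
  linarith
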